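/- For every rule M on the triangle there exist a peak profile b : {a,b,c} → ℕ, a vertex i, an alternative report b'_i ∈ ℕ, and a utility function u single-peaked with peak b_i, such that u(x_i(M(b'))) > u(x_i(M(b))), where b' agrees with b on the other two vertices and equals b'_i at i. Consequently, no rule selecting Pareto optimal (maximum) b-matchings is peak strategyproof. -/

import Mathlib

variable {V : Type*} [Fintype V] [DecidableEq V]

/-- The utility of vertex `i` under the b-matching `f`: the total weight of edges incident to `i`. -/
def bmUtil (G : SimpleGraph V) [DecidableRel G.Adj] (f : Sym2 V → ℕ) (i : V) : ℕ :=
  ∑ e ∈ G.edgeFinset.filter (fun e => i ∈ e), f e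

/-- `f` is a feasible b-matching for `(G, b)`. -/
def BMFeasible (G : SimpleGraph V) [DecidableRel G.Adj] (b : V → ℕ) (f : Sym2 V → ℕ) : Prop :=
  ∀ i, bmUtil G f i ≤ b i

/-- The size of a b-matching: the total weight over all edges. -/
def bmSize (G : SimpleGraph V) [DecidableRel G.Adj] (f : Sym2 V → ℕ) : ℕ :=
  ∑ e ∈ G.edgeFinset, f e

/-- `f` is a maximum b-matching for `(G, b)`. -/
def IsMaxBM (G : SimpleGraph V) [DecidableRel G.Adj] (b : V → ℕ) (f : Sym2 V → ℕ) : Prop :=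
  BMFeasible G b f ∧ ∀ g, BMFeasible G b g → bmSize G g ≤ bmSize G f

/-- Underdemanded vertices: unsaturated in at least one maximum b-matching. -/
def VU (G : SimpleGraph V) [DecidableRel G.Adj] (b : V → ℕ) : Set V :=
  {i | ∃ f, IsMaxBM G b f ∧ bmUtil G f i < b i}

/-- Overdemanded vertices: not underdemanded, with at least one underdemanded neighbor. -/
def VO (G : SimpleGraph V) [DecidableRel G.Adj] (b : V → ℕ) : Set V :=
  {i | i ∉ VU G b ∧ ∃ j ∈ VU G b, G.Adj i j}

/-- Perfectly demanded vertices. -/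
def VP (G : SimpleGraph V) [DecidableRel G.Adj] (b : V → ℕ) : Set V :=
  {i | i ∉ VU G b ∧ i ∉ VO G b}

/-- `u : ℕ → ℝ` is single-peaked with peak `p`. -/
def SinglePeaked (u : ℕ → ℝ) (p : ℕ) : Prop :=
  (∀ x' x : ℕ, x' < x → x ≤ p → u x' < u x) ∧
  (∀ x x' : ℕ, p ≤ x → x < x' → u x' < u x)

/-!
Utilities sum to twice the size of a b-matching, so a profile with odd total cannot be saturated
and every rule leaves some vertex `i` strictly below its peak. Suppose the profile counts the
visits of an odd closed walk. Rotate the walk to start at `i`: its alternate edges, the first and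
last included, saturate every vertex once the peak of `i` is raised by one. By raising its report
by one, `i` therefore moves from below its peak to one unit above it, which some single-peaked
utilities prefer. On the triangle the walk is the 3-cycle and the profile is `(1, 1, 1)`.
-/

section BMatching

variable {G : SimpleGraph V} [DecidableRel G.Adj]

theorem bmUtil_add (f g : Sym2 V → ℕ) (i : V) :
    bmUtil G (f + g) i = bmUtil G f i + bmUtil G g i :=
  Finset.sum_add_distrib

theorem bmUtil_single {v w : V} (h : G.Adj v w) (n : ℕ) (i : V) :
    bmUtil G (Pi.single s(v, w) n) i = if i = v ∨ i = w then n else 0 := by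
  simp [bmUtil, Finset.sum_pi_single', h]

theorem sum_bmUtil (f : Sym2 V → ℕ) : ∑ i, bmUtil G f i = 2 * bmSize G f := by
  have card_endpoints : ∀ e ∈ G.edgeFinset, ({i | i ∈ e} : Finset V).card = 2 := fun e he ↦ by
    rw [← Sym2.card_toFinset_of_not_isDiag e (G.not_isDiag_of_mem_edgeFinset he)]
    congr 1
    ext i
    simp
  calc ∑ i, bmUtil G f i
      = ∑ e ∈ G.edgeFinset, ∑ i with i ∈ e, f e := Finset.sum_comm' (by simp [and_comm])
    _ = ∑ e ∈ G.edgeFinset, 2 * f e := Finset.sum_congr rfl fun e he ↦ by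
        rw [Finset.sum_const, card_endpoints e he, smul_eq_mul]
    _ = 2 * bmSize G f := (Finset.mul_sum ..).symm

theorem BMFeasible.exists_bmUtil_lt {b : V → ℕ} {f : Sym2 V → ℕ} (hf : BMFeasible G b f)
    (hb : Odd (∑ i, b i)) : ∃ i, bmUtil G f i < b i := by
  by_contra! hsat
  have sum_eq : ∑ i, b i = 2 * bmSize G f := by
    rw [← sum_bmUtil]
    exact Finset.sum_congr rfl fun i _ ↦ (hsat i).antisymm (hf i)
  exact Nat.not_odd_iff_even.mpr (sum_eq ▸ even_two_mul _) hb

theorem IsMaxBM.bmUtil_eq_of_perfect {b : V → ℕ} {f g : Sym2 V → ℕ} (hf : IsMaxBM G b f)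
    (hg : ∀ i, bmUtil G g i = b i) (i : V) : bmUtil G f i = b i := by
  have size_le : bmSize G g ≤ bmSize G f := hf.2 g fun j ↦ (hg j).le
  have sum_eq : ∑ j, bmUtil G f j = ∑ j, b j := by
    refine (Finset.sum_le_sum fun j _ ↦ hf.1 j).antisymm ?_
    calc ∑ j, b j = 2 * bmSize G g := by simp only [← hg, sum_bmUtil]
      _ ≤ 2 * bmSize G f := by gcongr
      _ = ∑ j, bmUtil G f j := (sum_bmUtil f).symm
  exact (Finset.sum_eq_sum_iff_of_le fun j _ ↦ hf.1 j).mp sum_eq i (Finset.mem_univ i)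

end BMatching

section VisitProfile

variable {α : Type*} [DecidableEq α] {G : SimpleGraph α}

/-- The peak profile of a closed walk, under which the peak of a vertex is the number of times the
walk visits it. The `tail` keeps the base point, both first and last in the support, from being
counted once too often. -/
def visitProfile {v : α} (w : G.Walk v v) (i : α) : ℕ :=
  w.support.tail.count i

theorem visitProfile_rotate {v i : α} (w : G.Walk v v) (hi : i ∈ w.support) :
    visitProfile (w.rotate i hi) = visitProfile w :=
  funext fun j ↦ (w.support_rotate i hi).perm.count_eq j

theorem count_support_eq_update_visitProfile {v : α} (w : G.Walk v v) (i : α) :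
    w.support.count i = Function.update (visitProfile w) v (visitProfile w v + 1) i := by
  rw [← w.cons_tail_support, List.count_cons, Function.update_apply]
  grind [visitProfile]

end VisitProfile

section OddWalk

variable {G : SimpleGraph V}

theorem sum_visitProfile {v : V} (w : G.Walk v v) : ∑ i, visitProfile w i = w.length := by
  simpa [visitProfile] using Multiset.sum_count_eq_card (s := Finset.univ)
    (m := (w.support.tail : Multiset V)) fun i _ ↦ Finset.mem_univ i

-- The witness puts one unit on the first, third, ..., last edge of the walk.
theorem exists_bmUtil_eq_count_support [DecidableRel G.Adj] {v w : V} (p : G.Walk v w)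
    (hp : Odd p.length) : ∃ f, ∀ i, bmUtil G f i = p.support.count i := by
  match p with
  | .nil => simp at hp
  | .cons h .nil =>
    refine ⟨Pi.single s(v, w) 1, fun i ↦ ?_⟩
    rw [bmUtil_single h]
    grind [h.ne, SimpleGraph.Walk.support_cons, SimpleGraph.Walk.support_nil]
  | .cons (v := x) h (.cons _ q) =>
    have hq : Odd q.length := by simpa [Nat.odd_add_one] using hp
    obtain ⟨f, hf⟩ := exists_bmUtil_eq_count_support q hq
    refine ⟨Pi.single s(v, x) 1 + f, fun i ↦ ?_⟩
    rw [bmUtil_add, bmUtil_single h, hf]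
    grind [h.ne, SimpleGraph.Walk.support_cons]

theorem exists_perfect_update_visitProfile [DecidableRel G.Adj] {v i : V} (w : G.Walk v v)
    (hw : Odd w.length) (hi : i ∈ w.support) :
    ∃ f, ∀ j, bmUtil G f j = Function.update (visitProfile w) i (visitProfile w i + 1) j := by
  obtain ⟨f, hf⟩ := exists_bmUtil_eq_count_support (w.rotate i hi) (by simpa using hw)
  refine ⟨f, fun j ↦ ?_⟩
  rw [hf, count_support_eq_update_visitProfile, visitProfile_rotate]

end OddWalk

theorem exists_singlePeaked_lt {x p y : ℕ} (hx : x < p) (hy : p ≤ y) :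
    ∃ u, SinglePeaked u p ∧ u x < u y := by
  have hxp : (x : ℝ) < p := mod_cast hx
  have hpy : (p : ℝ) ≤ y := mod_cast hy
  -- Subtracting `y` below the peak makes every value there less than the value `p - y` at `y`.
  refine ⟨fun z ↦ if z < p then (z : ℝ) - y else p - z, ⟨fun z' z hlt hz ↦ ?_,
    fun z z' hz hlt ↦ ?_⟩, ?_⟩
  · have hlt' : (z' : ℝ) < z := mod_cast hlt
    grind
  · have hlt' : (z : ℝ) < z' := mod_cast hlt
    grind
  · grind

theorem stmt_10_general {G : SimpleGraph V} [DecidableRel G.Adj] (hG : ¬ G.IsBipartite)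
    (M : (V → ℕ) → Sym2 V → ℕ) (hM : ∀ b, IsMaxBM G b (M b)) :
    ∃ (b : V → ℕ) (i : V) (b'i : ℕ) (u : ℕ → ℝ), SinglePeaked u (b i) ∧
      u (bmUtil G (M (Function.update b i b'i)) i) > u (bmUtil G (M b) i) := by
  obtain ⟨v, w, hw⟩ : ∃ (v : V) (w : G.Walk v v), Odd w.length := by
    simpa [SimpleGraph.IsBipartite, SimpleGraph.two_colorable_iff_forall_loop_even] using hG
  let b := visitProfile w
  obtain ⟨i, below_peak⟩ : ∃ i, bmUtil G (M b) i < b i :=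
    (hM b).1.exists_bmUtil_lt (by rwa [sum_visitProfile])
  have hi : i ∈ w.support :=
    List.mem_of_mem_tail (List.count_pos_iff.mp (Nat.zero_lt_of_lt below_peak))
  obtain ⟨f, perfect⟩ := exists_perfect_update_visitProfile w hw hi
  have above_peak : bmUtil G (M (Function.update b i (b i + 1))) i = b i + 1 := by
    rw [(hM _).bmUtil_eq_of_perfect perfect, Function.update_self]
  obtain ⟨u, hu, gain⟩ := exists_singlePeaked_lt below_peak (Nat.le_succ (b i))
  exact ⟨b, i, b i + 1, u, hu, by rwa [above_peak]⟩

/-- no rule selecting maximum b-matchings on the triangle is peak strategyproof: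
for every such rule there are a peak profile, a vertex, a misreport, and a single-peaked utility
function under which the misreport is strictly profitable. -/
theorem stmt_10 (M : (Fin 3 → ℕ) → (Sym2 (Fin 3) → ℕ))
    (hM : ∀ b : Fin 3 → ℕ, IsMaxBM (⊤ : SimpleGraph (Fin 3)) b (M b)) :
    ∃ (b : Fin 3 → ℕ) (i : Fin 3) (b'i : ℕ) (u : ℕ → ℝ),
      SinglePeaked u (b i) ∧
      u (bmUtil (⊤ : SimpleGraph (Fin 3)) (M (Function.update b i b'i)) i) >
        u (bmUtil (⊤ : SimpleGraph (Fin 3)) (M b) i) := by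
  refine stmt_10_general (fun hcol ↦ ?_) M hM
  simpa using hcol.card_le_of_pairwise_adj id fun _ _ h ↦ h
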